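/- (Converse bound for the strong converse exponent.) For any discrete memoryless channel W: X → Y on finite alphabets and any r ≥ 0: if α ∈ (0,1), then E_sc^{(α)}(W,r) ≥ max_{α≤β≤1} [α(1−β)/(β(1−α))](I_β(W) − r); and if α ∈ [1,∞], then E_sc^{(α)}(W,r) ≥ max{I_α(W) − r, 0}. -/

import Mathlib

open scoped ENNReal NNReal BigOperators Classical
open Filter

noncomputable section

namespace RST

/-- Base-2 logarithm `ℝ≥0∞ → EReal`, with `log 0 = ⊥` and `log ⊤ = ⊤`. -/
def elog2 (s : ℝ≥0∞) : EReal :=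
  if s = 0 then ⊥ else if s = ⊤ then ⊤ else ((Real.logb 2 s.toReal : ℝ) : EReal)

/-- Base-2 logarithm `EReal → EReal` (for nonnegative arguments). -/
def eLog2 (x : EReal) : EReal :=
  if x = ⊤ then ⊤ else if x ≤ 0 then ⊥ else ((Real.logb 2 x.toReal : ℝ) : EReal)

/-- Base-2 exponential `EReal → ℝ≥0∞`. -/
def epow2 (x : EReal) : ℝ≥0∞ :=
  if x = ⊤ then ⊤ else if x = ⊥ then 0 else ENNReal.ofReal ((2 : ℝ) ^ x.toReal)

variable {X Y : Type*}

/-- A probability distribution on a finite alphabet, as an `ℝ≥0∞`-valued function. -/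
def IsDist [Fintype X] (P : X → ℝ≥0∞) : Prop := ∑ x, P x = 1

/-- A discrete memoryless channel: every row is a probability distribution. -/
def IsChannel [Fintype X] [Fintype Y] (W : X → Y → ℝ≥0∞) : Prop := ∀ x, ∑ y, W x y = 1

/-- Order-`α` Rényi divergence (base 2), with the order `α ∈ [0,∞]` encoded as `ℝ≥0∞`.
The conventions `0/0 = 0` and `a/0 = ∞` (for `a > 0`, `α > 1`) are built into `ℝ≥0∞`
arithmetic.  The second argument is allowed to be an arbitrary nonnegative vector. -/
def renyiD [Fintype X] (α : ℝ≥0∞) (P Q : X → ℝ≥0∞) : EReal :=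
  if α = 0 then - elog2 (∑ x ∈ Finset.univ.filter fun x => P x ≠ 0, Q x)
  else if α = 1 then ∑ x, ((P x).toReal : EReal) * elog2 (P x / Q x)
  else if α = ⊤ then elog2 (⨆ x, P x / Q x)
  else (((α.toReal - 1)⁻¹ : ℝ) : EReal) *
    elog2 (∑ x, P x ^ α.toReal * Q x ^ (1 - α.toReal))

/-- The `X`-marginal of a joint distribution on `X × Y`. -/
def margX [Fintype X] [Fintype Y] (P : X × Y → ℝ≥0∞) : X → ℝ≥0∞ := fun x => ∑ y, P (x, y)

/-- Order-`α` Rényi mutual information `I_α(X:Y)_P = min_{Q_Y} D_α(P‖P_X × Q_Y)`. -/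
def renyiMI [Fintype X] [Fintype Y] (α : ℝ≥0∞) (P : X × Y → ℝ≥0∞) : EReal :=
  ⨅ Q : {Q : Y → ℝ≥0∞ // IsDist Q}, renyiD α P fun p => margX P p.1 * Q.1 p.2

/-- The joint input-output distribution `P_X · W`. -/
def joint [Fintype X] [Fintype Y] (PX : X → ℝ≥0∞) (W : X → Y → ℝ≥0∞) : X × Y → ℝ≥0∞ :=
  fun p => PX p.1 * W p.1 p.2

/-- Order-`α` Rényi capacity `I_α(W) = max_{P_X} I_α(X:Y)_{P_X · W}`. -/
def renyiCap [Fintype X] [Fintype Y] (α : ℝ≥0∞) (W : X → Y → ℝ≥0∞) : EReal :=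
  ⨆ P : {P : X → ℝ≥0∞ // IsDist P}, renyiMI α (joint P.1 W)

/-- `N` is a simulation of a channel `X → Y` with communication cost at most `c` bits:
shared randomness `K = Fin m` with distribution `PK`, a message set `{1,…,M}` with
`log₂ M ≤ c`, an encoder `E` and a decoder `D`. -/
def IsSimulation [Fintype X] [Fintype Y] (c : ℝ) (N : X → Y → ℝ≥0∞) : Prop :=
  ∃ (m M : ℕ) (PK : Fin m → ℝ≥0∞) (E : X → Fin m → Fin M → ℝ≥0∞)
    (D : Fin M → Fin m → Y → ℝ≥0∞),
    0 < M ∧ Real.logb 2 M ≤ c ∧ (∑ k, PK k = 1) ∧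
    (∀ x k, ∑ j, E x k j = 1) ∧ (∀ j k, ∑ y, D j k y = 1) ∧
    ∀ x y, N x y = ∑ k, ∑ j, PK k * E x k j * D j k y

/-- `D_α(W, N) := max_x D_α(W(·|x) ‖ N(·|x))`. -/
def chD [Fintype X] [Fintype Y] (α : ℝ≥0∞) (W N : X → Y → ℝ≥0∞) : EReal :=
  ⨆ x, renyiD α (W x) (N x)

/-- `𝖣_α(W, c) := min_{N ∈ A(W,c)} D_α(W, N)`. -/
def simD [Fintype X] [Fintype Y] (α : ℝ≥0∞) (W : X → Y → ℝ≥0∞) (c : ℝ) : EReal :=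
  ⨅ N : {N : X → Y → ℝ≥0∞ // IsSimulation c N}, chD α W N.1

/-- The `n`-fold memoryless extension `W^{×n}` of a channel `W`. -/
def prodCh [Fintype X] [Fintype Y] (n : ℕ) (W : X → Y → ℝ≥0∞) :
    (Fin n → X) → (Fin n → Y) → ℝ≥0∞ :=
  fun xs ys => ∏ i, W (xs i) (ys i)

/-- A sequence of communication costs with rate at most `r`. -/
def RateOK (r : ℝ) (c : ℕ → ℝ) : Prop :=
  (∀ n, 0 ≤ c n) ∧ Filter.limsup (fun n : ℕ => ((c n / n : ℝ) : EReal)) Filter.atTop ≤ (r : EReal)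

/-- Reliability function `E_rf^{(α)}(W, r)`. -/
def Erf [Fintype X] [Fintype Y] (α : ℝ≥0∞) (W : X → Y → ℝ≥0∞) (r : ℝ) : EReal :=
  ⨆ c : {c : ℕ → ℝ // RateOK r c},
    Filter.liminf
      (fun n : ℕ => (((-1 : ℝ) / n : ℝ) : EReal) * eLog2 (simD α (prodCh n W) (c.1 n)))
      Filter.atTop

/-- Strong converse exponent `E_sc^{(α)}(W, r)`. -/
def Esc [Fintype X] [Fintype Y] (α : ℝ≥0∞) (W : X → Y → ℝ≥0∞) (r : ℝ) : EReal :=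
  ⨅ c : {c : ℕ → ℝ // RateOK r c},
    Filter.limsup
      (fun n : ℕ => (((1 : ℝ) / n : ℝ) : EReal) * simD α (prodCh n W) (c.1 n))
      Filter.atTop

/-- The `α`-Rényi simulation rate `R_RST^{(α)}(W)`. -/
def Rrst [Fintype X] [Fintype Y] (α : ℝ≥0∞) (W : X → Y → ℝ≥0∞) : EReal :=
  ⨅ c : {c : ℕ → ℝ // (∀ n, 0 ≤ c n) ∧
      Filter.limsup (fun n : ℕ => simD α (prodCh n W) (c n)) Filter.atTop = 0},
    Filter.limsup (fun n : ℕ => ((c.1 n / n : ℝ) : EReal)) Filter.atTop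

/-- n-fold product of a joint distribution on `X × Y`, as a distribution on pairs of
sequences. -/
def prodJoint [Fintype X] [Fintype Y] (n : ℕ) (P : X × Y → ℝ≥0∞) :
    (Fin n → X) × (Fin n → Y) → ℝ≥0∞ :=
  fun p => ∏ i, P (p.1 i, p.2 i)

/-- n-fold product distribution. -/
def prodDist [Fintype X] (n : ℕ) (P : X → ℝ≥0∞) : (Fin n → X) → ℝ≥0∞ :=
  fun xs => ∏ i, P (xs i)

/-- The type (empirical count vector) of a sequence. -/
def seqType [Fintype Y] [DecidableEq Y] {n : ℕ} (ys : Fin n → Y) : Y → ℕ :=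
  fun y => (Finset.univ.filter fun i => ys i = y).card

/-- The cardinality of the type class of a sequence. -/
def typeClassCard [Fintype Y] [DecidableEq Y] {n : ℕ} (ys : Fin n → Y) : ℕ :=
  (Finset.univ.filter fun zs : Fin n → Y => seqType zs = seqType ys).card

/-- The number of types of sequences in `Y^n`. -/
def numTypes (Y : Type*) [Fintype Y] [DecidableEq Y] (n : ℕ) : ℕ :=
  (Finset.univ.image fun ys : Fin n → Y => seqType ys).card

/-- `Φ_{Y^n}`: the uniform mixture over type classes of `Y^n`. -/
def PhiY (Y : Type*) [Fintype Y] [DecidableEq Y] (n : ℕ) : (Fin n → Y) → ℝ≥0∞ :=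
  fun ys => ((numTypes Y n : ℝ≥0∞) * (typeClassCard ys : ℝ≥0∞))⁻¹

end RST

namespace RST

/-!
A simulation `N` of cost `c` is dominated by `2 ^ c · Q` for a single output distribution `Q`.
Monotonicity of the divergence in its second argument therefore gives
`I_α(P·W) ≤ D_α(P·W ‖ P × Q) ≤ D_α(P·W ‖ P·N) + c ≤ D_α(W, N) + c`.
Minimizing `D_α(P·W ‖ P × Q)` over `Q` is explicitly solvable (Sibson's identity), and the solution
for `W^{×n}` under i.i.d. inputs factorizes, so that `n I_α(P·W) ≤ 𝖣_α(W^{×n}, c) + c`; dividing by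
`n` bounds the exponent below by `I_α(W) - r`. For `α < 1` every order `β ∈ [α, 1]` may be used
instead, because Hölder's inequality yields `α(1-β)/(β(1-α)) · D_β ≤ D_α`.
-/

section Logarithm

lemma elog2_eq_mul_log (s : ℝ≥0∞) :
    elog2 s = (((Real.log 2)⁻¹ : ℝ) : EReal) * ENNReal.log s := by
  have hpos : 0 < (Real.log 2)⁻¹ := inv_pos.2 (Real.log_pos one_lt_two)
  unfold elog2 ENNReal.log
  split_ifs
  · exact (EReal.coe_mul_bot_of_pos hpos).symm
  · exact (EReal.coe_mul_top_of_pos hpos).symm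
  · rw [← EReal.coe_mul, Real.logb, div_eq_inv_mul]

lemma elog2_of_ne {s : ℝ≥0∞} (h0 : s ≠ 0) (htop : s ≠ ⊤) : elog2 s = Real.logb 2 s.toReal := by
  rw [elog2, if_neg h0, if_neg htop]

lemma elog2_mono : Monotone elog2 := fun s t hst => by
  rw [elog2_eq_mul_log, elog2_eq_mul_log]
  exact mul_le_mul_of_nonneg_left (ENNReal.log_le_log hst)
    (EReal.coe_nonneg.2 (inv_nonneg.2 (Real.log_nonneg one_le_two)))

lemma elog2_top : elog2 ⊤ = ⊤ := by
  rw [elog2, if_neg ENNReal.top_ne_zero, if_pos rfl]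

@[simp] lemma elog2_one : elog2 1 = 0 := by
  rw [elog2_eq_mul_log, ENNReal.log_one, mul_zero]

lemma elog2_nonneg {s : ℝ≥0∞} (hs : 1 ≤ s) : 0 ≤ elog2 s :=
  elog2_one ▸ elog2_mono hs

lemma elog2_mul (s t : ℝ≥0∞) : elog2 (s * t) = elog2 s + elog2 t := by
  simp only [elog2_eq_mul_log, ENNReal.log_mul_add]
  exact EReal.left_distrib_of_nonneg_of_ne_top
    (EReal.coe_nonneg.2 (inv_nonneg.2 (Real.log_nonneg one_le_two))) (EReal.coe_ne_top _) _ _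

lemma elog2_rpow (s : ℝ≥0∞) (a : ℝ) : elog2 (s ^ a) = a * elog2 s := by
  simp only [elog2_eq_mul_log, ENNReal.log_rpow]
  exact mul_left_comm _ _ _

lemma elog2_pow (s : ℝ≥0∞) (n : ℕ) : elog2 (s ^ n) = n * elog2 s := by
  rw [← ENNReal.rpow_natCast, elog2_rpow]
  rfl

@[simp] lemma elog2_two_rpow (c : ℝ) : elog2 (2 ^ c) = c := by
  rw [elog2_rpow, elog2_of_ne two_ne_zero ENNReal.ofNat_ne_top, ENNReal.toReal_ofNat,
    Real.logb_self_eq_one one_lt_two, EReal.coe_one, mul_one]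

end Logarithm

section ERealSum

variable {ι : Type*}

lemma ereal_coe_sum (s : Finset ι) (f : ι → ℝ) :
    ((∑ i ∈ s, f i : ℝ) : EReal) = ∑ i ∈ s, (f i : EReal) :=
  map_sum (⟨⟨Real.toEReal, EReal.coe_zero⟩, EReal.coe_add⟩ : ℝ →+ EReal) f s

lemma ereal_mul_sum {a : ℝ} (ha : 0 ≤ a) (s : Finset ι) (f : ι → EReal) :
    (a : EReal) * ∑ i ∈ s, f i = ∑ i ∈ s, (a : EReal) * f i :=
  map_sum (⟨⟨fun e => (a : EReal) * e, mul_zero _⟩, EReal.left_distrib_of_nonneg_of_ne_top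
    (EReal.coe_nonneg.2 ha) (EReal.coe_ne_top a)⟩ : EReal →+ EReal) f s

lemma ereal_sum_mul {s : Finset ι} {f : ι → ℝ} (hf : ∀ i ∈ s, 0 ≤ f i) (e : EReal) :
    ∑ i ∈ s, (f i : EReal) * e = ((∑ i ∈ s, f i : ℝ) : EReal) * e := by
  induction s using Finset.cons_induction with
  | empty => simp
  | cons i s hi ih =>
    rw [Finset.forall_mem_cons] at hf
    rw [Finset.sum_cons, Finset.sum_cons, ih hf.2, EReal.coe_add, EReal.right_distrib_of_nonneg
      (EReal.coe_nonneg.2 hf.1) (EReal.coe_nonneg.2 (Finset.sum_nonneg hf.2))]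

end ERealSum

section Distribution

variable {X Y : Type*} [Fintype X] [Fintype Y]

lemma IsDist.ne_top {P : X → ℝ≥0∞} (hP : IsDist P) (x : X) : P x ≠ ⊤ :=
  ENNReal.sum_ne_top.1 (hP.symm ▸ ENNReal.one_ne_top) x (Finset.mem_univ x)

lemma IsDist.exists_ne_zero {P : X → ℝ≥0∞} (hP : IsDist P) : ∃ x, P x ≠ 0 := by
  by_contra! h
  exact one_ne_zero (hP.symm.trans (Finset.sum_eq_zero fun x _ => h x))

lemma IsDist.sum_toReal {P : X → ℝ≥0∞} (hP : IsDist P) : ∑ x, (P x).toReal = 1 := by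
  rw [← ENNReal.toReal_sum fun x _ => hP.ne_top x, hP, ENNReal.toReal_one]

lemma isDist_normalize {z : X → ℝ≥0∞} (h0 : ∑ x, z x ≠ 0) (htop : ∑ x, z x ≠ ⊤) :
    IsDist fun x => z x / ∑ x, z x := by
  simp only [IsDist, div_eq_mul_inv, ← Finset.sum_mul]
  exact ENNReal.mul_inv_cancel h0 htop

lemma rpow_le_rpow_of_nonpos {s t : ℝ≥0∞} {a : ℝ} (ha : a ≤ 0) (hst : s ≤ t) : t ^ a ≤ s ^ a := by
  rw [← neg_neg a, ENNReal.rpow_neg t, ENNReal.rpow_neg s]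
  exact ENNReal.inv_le_inv.2 (ENNReal.rpow_le_rpow hst (neg_nonneg.2 ha))

lemma IsDist.exists_rpow_sum_mul_le {P : X → ℝ≥0∞} (hP : IsDist P) (T : X → ℝ≥0∞) (a : ℝ) :
    ∃ x, (∑ x, P x * T x) ^ a ≤ T x ^ a := by
  have : Nonempty X := let ⟨x, _⟩ := hP.exists_ne_zero; ⟨x⟩
  have mean_const (t : ℝ≥0∞) : ∑ x, P x * t = t := by rw [← Finset.sum_mul, hP, one_mul]
  rcases le_total 0 a with ha | ha
  · obtain ⟨x, hx⟩ := Finite.exists_max T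
    refine ⟨x, ENNReal.rpow_le_rpow ?_ ha⟩
    calc ∑ x', P x' * T x' ≤ ∑ x', P x' * T x :=
          Finset.sum_le_sum fun x' _ => by gcongr; exact hx x'
      _ = T x := mean_const _
  · obtain ⟨x, hx⟩ := Finite.exists_min T
    refine ⟨x, rpow_le_rpow_of_nonpos ha ?_⟩
    calc T x = ∑ x', P x' * T x := (mean_const _).symm
      _ ≤ ∑ x', P x' * T x' :=
          Finset.sum_le_sum fun x' _ => by gcongr; exact hx x'

lemma sum_prodDist (n : ℕ) (P : X → ℝ≥0∞) : ∑ xs, prodDist n P xs = (∑ x, P x) ^ n :=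
  (Fintype.sum_pow P n).symm

lemma IsDist.prodDist {P : X → ℝ≥0∞} (hP : IsDist P) (n : ℕ) : IsDist (prodDist n P) := by
  rw [IsDist, sum_prodDist, hP, one_pow]

lemma IsChannel.prodCh {W : X → Y → ℝ≥0∞} (hW : IsChannel W) (n : ℕ) : IsChannel (prodCh n W) :=
  fun xs => (Fintype.prod_sum fun i => W (xs i)).symm.trans
    (Finset.prod_eq_one fun i _ => hW (xs i))

lemma IsChannel.isDist {W : X → Y → ℝ≥0∞} (hW : IsChannel W) (x : X) : IsDist (W x) := hW x

lemma IsDist.isChannel_const {Q : Y → ℝ≥0∞} (hQ : IsDist Q) : IsChannel fun _ : X => Q :=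
  fun _ => hQ

lemma sum_joint (P : X → ℝ≥0∞) (W : X → Y → ℝ≥0∞) :
    ∑ p, joint P W p = ∑ x, P x * ∑ y, W x y := by
  simp only [joint, Fintype.sum_prod_type, Finset.mul_sum]

lemma IsDist.joint {P : X → ℝ≥0∞} (hP : IsDist P) {W : X → Y → ℝ≥0∞} (hW : IsChannel W) :
    IsDist (joint P W) := by
  simp only [IsDist, sum_joint, hW _, mul_one]
  exact hP

lemma margX_joint (P : X → ℝ≥0∞) {W : X → Y → ℝ≥0∞} (hW : IsChannel W) : margX (joint P W) = P := by
  funext x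
  rw [margX, ← mul_one (P x), ← hW x, Finset.mul_sum]
  rfl

end Distribution

section Holder

variable {X Y : Type*} [Fintype X] [Fintype Y]

/-- The order-`a` Hellinger sum `∑ P^a Q^(1-a)`, of which the Rényi divergence of order `a ≠ 1`
is a rescaled logarithm. -/
def hellinger (a : ℝ) (P Q : X → ℝ≥0∞) : ℝ≥0∞ := ∑ x, P x ^ a * Q x ^ (1 - a)

lemma hellinger_le_of_lt_one {a : ℝ} (h0 : 0 < a) (h1 : a < 1) (f g : X → ℝ≥0∞) :
    hellinger a f g ≤ (∑ x, f x) ^ a * (∑ x, g x) ^ (1 - a) := by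
  have conjugate : (a⁻¹).HolderConjugate (1 - a)⁻¹ :=
    Real.holderConjugate_iff.2 ⟨(one_lt_inv₀ h0).2 h1, by simp⟩
  simpa [hellinger, ← ENNReal.rpow_mul, h0.ne', (sub_pos.2 h1).ne'] using
    ENNReal.inner_le_Lp_mul_Lq Finset.univ (fun x => f x ^ a) (fun x => g x ^ (1 - a)) conjugate

lemma hellinger_eq_top_of_one_lt {a : ℝ} (h1 : 1 < a) {f g : X → ℝ≥0∞} {x : X} (hf : f x ≠ 0)
    (hg : g x = 0) : hellinger a f g = ⊤ := by
  refine ENNReal.sum_eq_top.2 ⟨x, Finset.mem_univ x, ?_⟩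
  rw [hg, ENNReal.zero_rpow_of_neg (sub_neg.2 h1)]
  exact ENNReal.mul_top (by simp [hf, (zero_lt_one.trans h1).le])

lemma rpow_sum_le_hellinger_of_one_lt {a : ℝ} (h1 : 1 < a) (f : X → ℝ≥0∞) {g : X → ℝ≥0∞}
    (hg : IsDist g) : (∑ x, f x) ^ a ≤ hellinger a f g := by
  by_cases hfg : ∃ x, g x = 0 ∧ f x ≠ 0
  · obtain ⟨x, hgx, hfx⟩ := hfg
    exact (hellinger_eq_top_of_one_lt h1 hfx hgx).symm ▸ le_top
  push Not at hfg
  -- Jensen's inequality for the likelihood ratio `f / g` under `g`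
  have mean_eq : ∑ x, g x * (f x / g x) = ∑ x, f x :=
    Finset.sum_congr rfl fun x _ => ENNReal.mul_div_cancel' (hfg x) fun h => (hg.ne_top x h).elim
  have moment_eq (x : X) : g x * (f x / g x) ^ a = f x ^ a * g x ^ (1 - a) := by
    by_cases hgx : g x = 0
    · simp [hgx, hfg x hgx, zero_lt_one.trans h1]
    · rw [ENNReal.div_rpow_of_nonneg _ _ (zero_le_one.trans h1.le), ENNReal.rpow_sub _ _ hgx
        (hg.ne_top x), ENNReal.rpow_one]
      simp only [div_eq_mul_inv, mul_left_comm]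
  calc (∑ x, f x) ^ a = (∑ x, g x * (f x / g x)) ^ a := by rw [mean_eq]
    _ ≤ ∑ x, g x * (f x / g x) ^ a :=
      ENNReal.rpow_arith_mean_le_arith_mean_rpow _ _ _ hg h1.le
    _ = hellinger a f g := Finset.sum_congr rfl fun x _ => moment_eq x

lemma rpow_sum_le_rpow_hellinger {a : ℝ} (h0 : 0 < a) (h1 : a ≠ 1) (f : X → ℝ≥0∞) {g : X → ℝ≥0∞}
    (hg : IsDist g) : (∑ x, f x) ^ (a / (a - 1)) ≤ hellinger a f g ^ (a - 1)⁻¹ := by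
  rw [div_eq_mul_inv, ENNReal.rpow_mul]
  rcases h1.lt_or_gt with hlt | hgt
  · refine rpow_le_rpow_of_nonpos (inv_nonpos.2 (sub_nonpos.2 hlt.le)) ?_
    simpa only [show ∑ x, g x = 1 from hg, ENNReal.one_rpow, mul_one] using
      hellinger_le_of_lt_one h0 hlt f g
  · exact ENNReal.rpow_le_rpow (rpow_sum_le_hellinger_of_one_lt hgt f hg)
      (inv_nonneg.2 (sub_nonneg.2 hgt.le))

end Holder

section RenyiDivergence

variable {X Y : Type*} [Fintype X] [Fintype Y]

lemma renyiD_one (P Q : X → ℝ≥0∞) :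
    renyiD 1 P Q = ∑ x, ((P x).toReal : EReal) * elog2 (P x / Q x) := by
  rw [renyiD, if_neg one_ne_zero, if_pos rfl]

lemma renyiD_top (P Q : X → ℝ≥0∞) : renyiD ⊤ P Q = elog2 (⨆ x, P x / Q x) := by
  rw [renyiD, if_neg ENNReal.top_ne_zero, if_neg ENNReal.top_ne_one, if_pos rfl]

lemma renyiD_ofReal {a : ℝ} (h0 : 0 < a) (h1 : a ≠ 1) (P Q : X → ℝ≥0∞) :
    renyiD (ENNReal.ofReal a) P Q = elog2 (hellinger a P Q ^ (a - 1)⁻¹) := by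
  rw [renyiD, if_neg (ENNReal.ofReal_pos.2 h0).ne', if_neg (by simpa using h1),
    if_neg ENNReal.ofReal_ne_top, ENNReal.toReal_ofReal h0.le, elog2_rpow, hellinger]

lemma order_cases {α : ℝ≥0∞} (hα : α ≠ 0) :
    α = 1 ∨ α = ⊤ ∨ ∃ a : ℝ, 0 < a ∧ a ≠ 1 ∧ α = ENNReal.ofReal a := by
  by_cases htop : α = ⊤
  · exact .inr (.inl htop)
  by_cases h1 : α = 1
  · exact .inl h1
  refine .inr (.inr ⟨α.toReal, ENNReal.toReal_pos hα htop, ?_, (ENNReal.ofReal_toReal htop).symm⟩)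
  rwa [Ne, ENNReal.toReal_eq_one_iff]

lemma sum_le_iSup_div (f : X → ℝ≥0∞) {g : X → ℝ≥0∞} (hg : IsDist g) :
    ∑ x, f x ≤ ⨆ x, f x / g x := by
  rcases eq_or_ne (⨆ x, f x / g x) ⊤ with htop | htop
  · exact htop ▸ le_top
  calc ∑ x, f x ≤ ∑ x, (⨆ x, f x / g x) * g x := Finset.sum_le_sum fun x _ =>
        (ENNReal.div_le_iff_le_mul (.inr htop) (.inl (hg.ne_top x))).1
          (le_iSup (fun x => f x / g x) x)
    _ = ⨆ x, f x / g x := by rw [← Finset.mul_sum, hg, mul_one]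

lemma gibbs_term_le {p q : ℝ≥0∞} (hp : p ≠ ⊤) (hq : q ≠ ⊤) :
    (((p.toReal - q.toReal) / Real.log 2 : ℝ) : EReal) ≤ (p.toReal : EReal) * elog2 (p / q) := by
  have hlog : 0 < Real.log 2 := Real.log_pos one_lt_two
  rcases eq_or_ne p 0 with rfl | hp0
  · simpa using div_nonpos_of_nonpos_of_nonneg (neg_nonpos.2 ENNReal.toReal_nonneg) hlog.le
  have hp_pos : 0 < p.toReal := ENNReal.toReal_pos hp0 hp
  rcases eq_or_ne q 0 with rfl | hq0
  · rw [ENNReal.div_zero hp0, elog2_top, EReal.coe_mul_top_of_pos hp_pos]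
    exact le_top
  have hratio : 0 < (p / q).toReal :=
    ENNReal.toReal_pos (ENNReal.div_ne_zero.2 ⟨hp0, hq⟩) (ENNReal.div_ne_top hp hq0)
  rw [elog2_of_ne (ENNReal.div_ne_zero.2 ⟨hp0, hq⟩) (ENNReal.div_ne_top hp hq0), ← EReal.coe_mul,
    EReal.coe_le_coe_iff, Real.logb, ← mul_div_assoc]
  gcongr
  calc p.toReal - q.toReal = p.toReal * (1 - (p / q).toReal⁻¹) := by
        rw [ENNReal.toReal_div]; field_simp
    _ ≤ p.toReal * Real.log (p / q).toReal := by
        gcongr; exact Real.one_sub_inv_le_log_of_pos hratio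

lemma renyiD_one_nonneg {P Q : X → ℝ≥0∞} (hP : IsDist P) (hQ : IsDist Q) : 0 ≤ renyiD 1 P Q := by
  rw [renyiD_one]
  refine le_trans (le_of_eq ?_)
    (Finset.sum_le_sum fun x _ => gibbs_term_le (hP.ne_top x) (hQ.ne_top x))
  rw [← ereal_coe_sum, ← Finset.sum_div, Finset.sum_sub_distrib, hP.sum_toReal, hQ.sum_toReal,
    sub_self, zero_div, EReal.coe_zero]

lemma renyiD_nonneg {α : ℝ≥0∞} (hα : α ≠ 0) {P Q : X → ℝ≥0∞} (hP : IsDist P) (hQ : IsDist Q) :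
    0 ≤ renyiD α P Q := by
  rcases order_cases hα with rfl | rfl | ⟨a, h0, h1, rfl⟩
  · exact renyiD_one_nonneg hP hQ
  · rw [renyiD_top]
    exact elog2_nonneg (hP.ge.trans (sum_le_iSup_div P hQ))
  · rw [renyiD_ofReal h0 h1]
    refine elog2_nonneg (le_trans (le_of_eq ?_) (rpow_sum_le_rpow_hellinger h0 h1 P hQ))
    rw [hP, ENNReal.one_rpow]

lemma rpow_hellinger_anti_right {a : ℝ} (h1 : a ≠ 1) (P : X → ℝ≥0∞) :
    Antitone fun Q => hellinger a P Q ^ (a - 1)⁻¹ := fun Q Q' hQ => by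
  rcases h1.lt_or_gt with hlt | hgt
  · refine rpow_le_rpow_of_nonpos (inv_nonpos.2 (sub_nonpos.2 hlt.le)) ?_
    exact Finset.sum_le_sum fun x _ =>
      mul_le_mul_right (ENNReal.rpow_le_rpow (hQ x) (sub_nonneg.2 hlt.le)) _
  · refine ENNReal.rpow_le_rpow ?_ (inv_nonneg.2 (sub_nonneg.2 hgt.le))
    exact Finset.sum_le_sum fun x _ =>
      mul_le_mul_right (rpow_le_rpow_of_nonpos (sub_nonpos.2 hgt.le) (hQ x)) _

lemma renyiD_anti_right {α : ℝ≥0∞} (hα : α ≠ 0) (P : X → ℝ≥0∞) : Antitone (renyiD α P) :=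
  fun Q Q' hQ => by
    rcases order_cases hα with rfl | rfl | ⟨a, h0, h1, rfl⟩
    · rw [renyiD_one, renyiD_one]
      exact Finset.sum_le_sum fun x _ => mul_le_mul_of_nonneg_left
        (elog2_mono (ENNReal.div_le_div_left (hQ x) _)) (EReal.coe_nonneg.2 ENNReal.toReal_nonneg)
    · rw [renyiD_top, renyiD_top]
      exact elog2_mono (iSup_mono fun x => ENNReal.div_le_div_left (hQ x) _)
    · rw [renyiD_ofReal h0 h1, renyiD_ofReal h0 h1]
      exact elog2_mono (rpow_hellinger_anti_right h1 P hQ)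

lemma rpow_hellinger_const_mul_mul {a : ℝ} (h1 : a ≠ 1) (P : X → ℝ≥0∞) {Q : X → ℝ≥0∞}
    (hQ : ∀ x, Q x ≠ ⊤) {t : ℝ≥0∞} (ht0 : t ≠ 0) (ht : t ≠ ⊤) :
    hellinger a P (fun x => t * Q x) ^ (a - 1)⁻¹ * t = hellinger a P Q ^ (a - 1)⁻¹ := by
  have scale : hellinger a P (fun x => t * Q x) = t ^ (1 - a) * hellinger a P Q := by
    simp only [hellinger, ENNReal.mul_rpow_of_ne_top ht (hQ _), Finset.mul_sum, mul_left_comm]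
  have hexp : (1 - a) * (a - 1)⁻¹ = -1 := by
    rw [← neg_sub a 1, neg_mul, mul_inv_cancel₀ (sub_ne_zero.2 h1)]
  have hpow : t ^ (1 - a) ≠ 0 ∧ t ^ (1 - a) ≠ ⊤ := by
    simp [ENNReal.rpow_eq_zero_iff, ENNReal.rpow_eq_top_iff, ht0, ht]
  rw [scale, ENNReal.mul_rpow_eq_ite, if_neg (by simp [hpow]), ← ENNReal.rpow_mul, hexp,
    ENNReal.rpow_neg_one, mul_comm, ← mul_assoc, ENNReal.mul_inv_cancel ht0 ht, one_mul]

lemma div_mul_mul_self (p q : ℝ≥0∞) {t : ℝ≥0∞} (ht0 : t ≠ 0) (ht : t ≠ ⊤) :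
    p / (t * q) * t = p / q := by
  rw [mul_comm, ← mul_div_assoc, ENNReal.mul_div_mul_left p q ht0 ht]

lemma renyiD_two_rpow_mul_add {α : ℝ≥0∞} (hα : α ≠ 0) {P Q : X → ℝ≥0∞} (hP : IsDist P)
    (hQ : ∀ x, Q x ≠ ⊤) (c : ℝ) : renyiD α P (fun x => 2 ^ c * Q x) + c = renyiD α P Q := by
  have h0 : (2 : ℝ≥0∞) ^ c ≠ 0 := (ENNReal.rpow_pos two_pos ENNReal.ofNat_ne_top).ne'
  have htop : (2 : ℝ≥0∞) ^ c ≠ ⊤ := ENNReal.rpow_ne_top_of_ne_zero two_ne_zero ENNReal.ofNat_ne_top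
  rcases order_cases hα with rfl | rfl | ⟨a, ha0, ha1, rfl⟩
  · have weight : (c : EReal) = ∑ x, ((P x).toReal : EReal) * c := by
      rw [ereal_sum_mul fun x _ => ENNReal.toReal_nonneg, hP.sum_toReal, EReal.coe_one, one_mul]
    rw [weight, renyiD_one, renyiD_one, ← Finset.sum_add_distrib]
    refine Finset.sum_congr rfl fun x _ => ?_
    rw [← EReal.left_distrib_of_nonneg_of_ne_top (EReal.coe_nonneg.2 ENNReal.toReal_nonneg)
      (EReal.coe_ne_top _), ← elog2_two_rpow c, ← elog2_mul, div_mul_mul_self _ _ h0 htop]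
  · rw [renyiD_top, renyiD_top, ← elog2_two_rpow c, ← elog2_mul, ENNReal.iSup_mul]
    simp only [div_mul_mul_self _ _ h0 htop]
  · rw [renyiD_ofReal ha0 ha1, renyiD_ofReal ha0 ha1, ← elog2_two_rpow c, ← elog2_mul,
      rpow_hellinger_const_mul_mul ha1 P hQ h0 htop]

lemma renyiD_le_add_of_le_two_rpow_mul {α : ℝ≥0∞} (hα : α ≠ 0) {P Q N : X → ℝ≥0∞} (hP : IsDist P)
    (hQ : ∀ x, Q x ≠ ⊤) {c : ℝ} (hN : ∀ x, N x ≤ 2 ^ c * Q x) :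
    renyiD α P Q ≤ renyiD α P N + c := by
  rw [← renyiD_two_rpow_mul_add hα hP hQ c]
  gcongr
  exact renyiD_anti_right hα P hN

end RenyiDivergence

section JointDistribution

variable {X Y : Type*} [Fintype X] [Fintype Y]

lemma hellinger_joint {a : ℝ} (h0 : 0 < a) {P : X → ℝ≥0∞} (hP : ∀ x, P x ≠ ⊤) (W : X → Y → ℝ≥0∞)
    {V : X → Y → ℝ≥0∞} (hV : ∀ x y, V x y ≠ ⊤) :
    hellinger a (joint P W) (joint P V) = ∑ x, P x * hellinger a (W x) (V x) := by
  rw [hellinger, Fintype.sum_prod_type]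
  refine Finset.sum_congr rfl fun x _ => ?_
  rw [hellinger, Finset.mul_sum]
  refine Finset.sum_congr rfl fun y _ => ?_
  rcases eq_or_ne (P x) 0 with hx | hx
  · simp [joint, hx, h0]
  have split : P x ^ a * P x ^ (1 - a) = P x := by
    rw [← ENNReal.rpow_add _ _ hx (hP x), add_sub_cancel, ENNReal.rpow_one]
  calc (P x * W x y) ^ a * (P x * V x y) ^ (1 - a)
      = (P x ^ a * P x ^ (1 - a)) * (W x y ^ a * V x y ^ (1 - a)) := by
        rw [ENNReal.mul_rpow_of_nonneg _ _ h0.le, ENNReal.mul_rpow_of_ne_top (hP x) (hV x y),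
          mul_mul_mul_comm]
    _ = P x * (W x y ^ a * V x y ^ (1 - a)) := by rw [split]

lemma renyiD_one_self {P : X → ℝ≥0∞} (hP : ∀ x, P x ≠ ⊤) : renyiD 1 P P = 0 := by
  rw [renyiD_one]
  refine Finset.sum_eq_zero fun x _ => ?_
  rcases eq_or_ne (P x) 0 with hx | hx
  · simp [hx]
  · rw [ENNReal.div_self hx (hP x), elog2_one, mul_zero]

lemma renyiD_one_joint (P : X → ℝ≥0∞) {Q : X → ℝ≥0∞} (hQ : ∀ x, Q x ≠ ⊤)
    {W V : X → Y → ℝ≥0∞} (hW : IsChannel W) (hV : IsChannel V) :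
    renyiD 1 (joint P W) (joint Q V) =
      renyiD 1 P Q + ∑ x, ((P x).toReal : EReal) * renyiD 1 (W x) (V x) := by
  have log_ratio (x : X) (y : Y) : elog2 (P x * W x y / (Q x * V x y)) =
      elog2 (P x / Q x) + elog2 (W x y / V x y) := by
    rw [← elog2_mul, ENNReal.mul_div_mul_comm (.inr ((hV.isDist x).ne_top y)) (.inl (hQ x))]
  simp only [renyiD_one, joint, Fintype.sum_prod_type]
  rw [← Finset.sum_add_distrib]
  refine Finset.sum_congr rfl fun x _ => ?_
  calc ∑ y, ((P x * W x y).toReal : EReal) * elog2 (P x * W x y / (Q x * V x y))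
      = ∑ y, ((P x).toReal : EReal) * (((W x y).toReal : EReal) * elog2 (P x / Q x) +
          ((W x y).toReal : EReal) * elog2 (W x y / V x y)) := by
        refine Finset.sum_congr rfl fun y _ => ?_
        rw [ENNReal.toReal_mul, EReal.coe_mul, log_ratio, mul_assoc,
          EReal.left_distrib_of_nonneg_of_ne_top (EReal.coe_nonneg.2 ENNReal.toReal_nonneg)
            (EReal.coe_ne_top _)]
    _ = ((P x).toReal : EReal) * (elog2 (P x / Q x) +
          ∑ y, ((W x y).toReal : EReal) * elog2 (W x y / V x y)) := by
        rw [← ereal_mul_sum ENNReal.toReal_nonneg, Finset.sum_add_distrib,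
          ereal_sum_mul fun y _ => ENNReal.toReal_nonneg, (hW.isDist x).sum_toReal, EReal.coe_one,
          one_mul]
    _ = _ := EReal.left_distrib_of_nonneg_of_ne_top (EReal.coe_nonneg.2 ENNReal.toReal_nonneg)
        (EReal.coe_ne_top _) _ _

lemma renyiD_one_joint_left {P : X → ℝ≥0∞} (hP : IsDist P) {W V : X → Y → ℝ≥0∞} (hW : IsChannel W)
    (hV : IsChannel V) :
    renyiD 1 (joint P W) (joint P V) = ∑ x, ((P x).toReal : EReal) * renyiD 1 (W x) (V x) := by
  rw [renyiD_one_joint P hP.ne_top hW hV, renyiD_one_self hP.ne_top, zero_add]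

lemma renyiD_joint_le_chD {α : ℝ≥0∞} (hα : α ≠ 0) {P : X → ℝ≥0∞} (hP : IsDist P)
    {W V : X → Y → ℝ≥0∞} (hW : IsChannel W) (hV : IsChannel V) :
    renyiD α (joint P W) (joint P V) ≤ chD α W V := by
  have le_chD (x : X) : renyiD α (W x) (V x) ≤ chD α W V :=
    le_iSup (fun x => renyiD α (W x) (V x)) x
  rcases order_cases hα with rfl | rfl | ⟨a, h0, h1, rfl⟩
  · rw [renyiD_one_joint_left hP hW hV]
    calc ∑ x, ((P x).toReal : EReal) * renyiD 1 (W x) (V x)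
        ≤ ∑ x, ((P x).toReal : EReal) * chD 1 W V := Finset.sum_le_sum fun x _ =>
          mul_le_mul_of_nonneg_left (le_chD x) (EReal.coe_nonneg.2 ENNReal.toReal_nonneg)
      _ = chD 1 W V := by
        rw [ereal_sum_mul fun x _ => ENNReal.toReal_nonneg, hP.sum_toReal, EReal.coe_one, one_mul]
  · have ratio_le (p : X × Y) : joint P W p / joint P V p ≤ ⨆ x, ⨆ y, W x y / V x y := by
      rcases eq_or_ne (P p.1) 0 with hx | hx
      · simp [joint, hx]
      · rw [joint, joint, ENNReal.mul_div_mul_left _ _ hx (hP.ne_top p.1)]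
        exact le_iSup₂ (f := fun x y => W x y / V x y) p.1 p.2
    have : Nonempty X := let ⟨x, _⟩ := hP.exists_ne_zero; ⟨x⟩
    obtain ⟨x, hx⟩ := exists_eq_ciSup_of_finite (f := fun x => ⨆ y, W x y / V x y)
    calc renyiD ⊤ (joint P W) (joint P V) ≤ elog2 (⨆ x, ⨆ y, W x y / V x y) := by
          rw [renyiD_top]; exact elog2_mono (iSup_le ratio_le)
      _ = renyiD ⊤ (W x) (V x) := by rw [renyiD_top, hx]
      _ ≤ chD ⊤ W V := le_chD x
  · obtain ⟨x, hx⟩ := hP.exists_rpow_sum_mul_le (fun x => hellinger a (W x) (V x)) (a - 1)⁻¹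
    refine le_trans ?_ (le_chD x)
    rw [renyiD_ofReal h0 h1, renyiD_ofReal h0 h1,
      hellinger_joint h0 hP.ne_top W fun x => (hV.isDist x).ne_top]
    exact elog2_mono hx

end JointDistribution

section MutualInformation

variable {X Y : Type*} [Fintype X] [Fintype Y]

lemma renyiMI_joint (α : ℝ≥0∞) (P : X → ℝ≥0∞) {W : X → Y → ℝ≥0∞} (hW : IsChannel W) :
    renyiMI α (joint P W) =
      ⨅ Q : {Q : Y → ℝ≥0∞ // IsDist Q}, renyiD α (joint P W) (joint P fun _ => Q.1) := by
  rw [renyiMI, margX_joint P hW]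
  rfl

/-- The output distribution of the channel `W` under the input distribution `P`. -/
def outputDist (P : X → ℝ≥0∞) (W : X → Y → ℝ≥0∞) (y : Y) : ℝ≥0∞ := ∑ x, P x * W x y

lemma IsDist.outputDist {P : X → ℝ≥0∞} (hP : IsDist P) {W : X → Y → ℝ≥0∞} (hW : IsChannel W) :
    IsDist (outputDist P W) := by
  unfold IsDist RST.outputDist
  rw [Finset.sum_comm, ← hP.joint hW, sum_joint]
  simp only [Finset.mul_sum]

/-- The unnormalized optimal output measure in Sibson's formula for the mutual information of
order `a`. -/
def sibson (a : ℝ) (P : X → ℝ≥0∞) (W : X → Y → ℝ≥0∞) (y : Y) : ℝ≥0∞ :=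
  (∑ x, P x * W x y ^ a) ^ a⁻¹

/-- The order-`∞` counterpart of `sibson`: the pointwise maximum of the rows of `W` over the
support of `P`. -/
def maxOutput (P : X → ℝ≥0∞) (W : X → Y → ℝ≥0∞) (y : Y) : ℝ≥0∞ :=
  ⨆ (x) (_ : P x ≠ 0), W x y

lemma exists_ne_zero_and_ne_zero {P : X → ℝ≥0∞} (hP : IsDist P) {W : X → Y → ℝ≥0∞}
    (hW : IsChannel W) : ∃ x y, P x ≠ 0 ∧ W x y ≠ 0 :=
  let ⟨p, hp⟩ := (hP.joint hW).exists_ne_zero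
  ⟨p.1, p.2, left_ne_zero_of_mul hp, right_ne_zero_of_mul hp⟩

lemma sum_sibson_ne_zero {a : ℝ} (h0 : 0 < a) {P : X → ℝ≥0∞} (hP : IsDist P) {W : X → Y → ℝ≥0∞}
    (hW : IsChannel W) : ∑ y, sibson a P W y ≠ 0 := by
  obtain ⟨x, y, hx, hy⟩ := exists_ne_zero_and_ne_zero hP hW
  simp only [Ne, Finset.sum_eq_zero_iff, sibson, ENNReal.rpow_eq_zero_iff_of_pos (inv_pos.2 h0)]
  push Not
  exact ⟨y, Finset.mem_univ y, x, Finset.mem_univ x,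
    mul_ne_zero hx ((ENNReal.rpow_eq_zero_iff_of_pos h0).not.2 hy)⟩

lemma sum_sibson_ne_top {a : ℝ} (h0 : 0 < a) {P : X → ℝ≥0∞} (hP : IsDist P) {W : X → Y → ℝ≥0∞}
    (hW : IsChannel W) : ∑ y, sibson a P W y ≠ ⊤ :=
  ENNReal.sum_ne_top.2 fun y _ => ENNReal.rpow_ne_top_of_nonneg (inv_nonneg.2 h0.le) <|
    ENNReal.sum_ne_top.2 fun x _ => ENNReal.mul_ne_top (hP.ne_top x) <|
      ENNReal.rpow_ne_top_of_nonneg h0.le ((hW.isDist x).ne_top y)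

lemma sum_maxOutput_ne_zero {P : X → ℝ≥0∞} (hP : IsDist P) {W : X → Y → ℝ≥0∞}
    (hW : IsChannel W) : ∑ y, maxOutput P W y ≠ 0 := by
  obtain ⟨x, y, hx, hy⟩ := exists_ne_zero_and_ne_zero hP hW
  refine fun h => hy (le_zero_iff.1 ?_)
  rw [← (Finset.sum_eq_zero_iff.1 h) y (Finset.mem_univ y)]
  exact le_iSup₂ (f := fun x (_ : P x ≠ 0) => W x y) x hx

lemma sum_maxOutput_ne_top (P : X → ℝ≥0∞) {W : X → Y → ℝ≥0∞} (hW : IsChannel W) :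
    ∑ y, maxOutput P W y ≠ ⊤ := by
  refine ENNReal.sum_ne_top.2 fun y _ => ne_top_of_le_ne_top ENNReal.one_ne_top ?_
  refine iSup₂_le fun x _ => ?_
  rw [← hW x]
  exact Finset.single_le_sum_of_canonicallyOrdered (f := W x) (Finset.mem_univ y)

lemma hellinger_joint_const {a : ℝ} (h0 : 0 < a) {P : X → ℝ≥0∞} (hP : IsDist P)
    (W : X → Y → ℝ≥0∞) {Q : Y → ℝ≥0∞} (hQ : IsDist Q) :
    hellinger a (joint P W) (joint P fun _ => Q) = hellinger a (sibson a P W) Q := by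
  rw [hellinger_joint h0 hP.ne_top W fun _ => hQ.ne_top]
  simp only [hellinger, Finset.mul_sum, sibson, ENNReal.rpow_inv_rpow h0.ne', Finset.sum_mul,
    mul_assoc]
  exact Finset.sum_comm

lemma hellinger_const_mul_self {a : ℝ} (h0 : 0 < a) (s : ℝ≥0∞) {Q : X → ℝ≥0∞} (hQ : IsDist Q) :
    hellinger a (fun x => s * Q x) Q = s ^ a := by
  rw [← mul_one (s ^ a), ← hQ, Finset.mul_sum]
  refine Finset.sum_congr rfl fun x _ => ?_
  rcases eq_or_ne (Q x) 0 with hx | hx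
  · simp [hx, h0]
  · rw [ENNReal.mul_rpow_of_nonneg _ _ h0.le, mul_assoc, ← ENNReal.rpow_add _ _ hx (hQ.ne_top x),
      add_sub_cancel, ENNReal.rpow_one]

lemma iInf_renyiD_ofReal {a : ℝ} (h0 : 0 < a) (h1 : a ≠ 1) {z : X → ℝ≥0∞} (hz0 : ∑ x, z x ≠ 0)
    (hztop : ∑ x, z x ≠ ⊤) :
    ⨅ Q : {Q : X → ℝ≥0∞ // IsDist Q}, renyiD (ENNReal.ofReal a) z Q.1 =
      elog2 ((∑ x, z x) ^ (a / (a - 1))) := by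
  refine le_antisymm (iInf_le_of_le ⟨_, isDist_normalize hz0 hztop⟩ ?_) (le_iInf fun Q => ?_)
  · have hz : z = fun x => (∑ x, z x) * (z x / ∑ x, z x) :=
      funext fun x => (ENNReal.mul_div_cancel hz0 hztop).symm
    have value := hellinger_const_mul_self h0 (∑ x, z x) (isDist_normalize hz0 hztop)
    rw [← hz] at value
    rw [renyiD_ofReal h0 h1, value, ← ENNReal.rpow_mul, div_eq_mul_inv]
  · rw [renyiD_ofReal h0 h1]
    exact elog2_mono (rpow_sum_le_rpow_hellinger h0 h1 z Q.2)

lemma iInf_renyiD_top {z : X → ℝ≥0∞} (hz0 : ∑ x, z x ≠ 0) (hztop : ∑ x, z x ≠ ⊤) :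
    ⨅ Q : {Q : X → ℝ≥0∞ // IsDist Q}, renyiD ⊤ z Q.1 = elog2 (∑ x, z x) := by
  refine le_antisymm (iInf_le_of_le ⟨_, isDist_normalize hz0 hztop⟩ ?_) (le_iInf fun Q => ?_)
  · rw [renyiD_top]
    exact elog2_mono (iSup_le fun x => ENNReal.div_le_of_le_mul
      (ENNReal.mul_div_cancel hz0 hztop).ge)
  · rw [renyiD_top]
    exact elog2_mono (sum_le_iSup_div z Q.2)

lemma renyiMI_ofReal_joint {a : ℝ} (h0 : 0 < a) (h1 : a ≠ 1) {P : X → ℝ≥0∞} (hP : IsDist P)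
    {W : X → Y → ℝ≥0∞} (hW : IsChannel W) :
    renyiMI (ENNReal.ofReal a) (joint P W) = elog2 ((∑ y, sibson a P W y) ^ (a / (a - 1))) := by
  rw [renyiMI_joint _ P hW,
    ← iInf_renyiD_ofReal h0 h1 (sum_sibson_ne_zero h0 hP hW) (sum_sibson_ne_top h0 hP hW)]
  refine iInf_congr fun Q => ?_
  rw [renyiD_ofReal h0 h1, renyiD_ofReal h0 h1, hellinger_joint_const h0 hP W Q.2]

lemma iSup_joint_div_joint_const {P : X → ℝ≥0∞} (hP : ∀ x, P x ≠ ⊤) (W : X → Y → ℝ≥0∞)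
    (Q : Y → ℝ≥0∞) :
    ⨆ p, joint P W p / joint P (fun _ => Q) p = ⨆ y, maxOutput P W y / Q y := by
  simp only [iSup_prod, maxOutput, ENNReal.iSup_div]
  rw [iSup_comm]
  refine iSup_congr fun y => iSup_congr fun x => ?_
  rcases eq_or_ne (P x) 0 with hx | hx
  · simp [joint, hx]
  · rw [iSup_pos hx]
    exact ENNReal.mul_div_mul_left _ _ hx (hP x)

lemma renyiMI_top_joint {P : X → ℝ≥0∞} (hP : IsDist P) {W : X → Y → ℝ≥0∞} (hW : IsChannel W) :
    renyiMI ⊤ (joint P W) = elog2 (∑ y, maxOutput P W y) := by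
  rw [renyiMI_joint _ P hW,
    ← iInf_renyiD_top (sum_maxOutput_ne_zero hP hW) (sum_maxOutput_ne_top P hW)]
  refine iInf_congr fun Q => ?_
  rw [renyiD_top, renyiD_top, iSup_joint_div_joint_const hP.ne_top]

lemma renyiD_one_outputDist_add {P : X → ℝ≥0∞} (hP : IsDist P) {W : X → Y → ℝ≥0∞}
    (hW : IsChannel W) (Q : Y → ℝ≥0∞) :
    renyiD 1 (joint P W) (joint P fun _ => outputDist P W) + renyiD 1 (outputDist P W) Q =
      renyiD 1 (joint P W) (joint P fun _ => Q) := by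
  have hJ := (hP.joint hW).ne_top
  have hR := (hP.outputDist hW).ne_top
  have marginal : renyiD 1 (outputDist P W) Q =
      ∑ p, ((joint P W p).toReal : EReal) * elog2 (outputDist P W p.2 / Q p.2) := by
    rw [renyiD_one, Fintype.sum_prod_type, Finset.sum_comm]
    refine Finset.sum_congr rfl fun y _ => ?_
    rw [show outputDist P W y = ∑ x, joint P W (x, y) from rfl,
      ENNReal.toReal_sum fun x _ => hJ (x, y)]
    exact (ereal_sum_mul (fun x _ => ENNReal.toReal_nonneg) _).symm
  rw [marginal, renyiD_one, renyiD_one, ← Finset.sum_add_distrib]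
  refine Finset.sum_congr rfl fun p _ => ?_
  rcases eq_or_ne (joint P W p) 0 with hp | hp
  · simp [hp]
  have hPp : P p.1 ≠ 0 := left_ne_zero_of_mul hp
  have hRp : outputDist P W p.2 ≠ 0 := fun h =>
    hp (Finset.sum_eq_zero_iff.1 h p.1 (Finset.mem_univ _))
  rw [← EReal.left_distrib_of_nonneg_of_ne_top (EReal.coe_nonneg.2 ENNReal.toReal_nonneg)
    (EReal.coe_ne_top _), ← elog2_mul]
  congr 2
  simp only [joint]
  rw [ENNReal.mul_div_mul_left _ _ hPp (hP.ne_top _),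
    ENNReal.mul_div_mul_left _ _ hPp (hP.ne_top _), ← mul_div_assoc,
    ENNReal.div_mul_cancel hRp (hR _)]

lemma renyiMI_one_joint {P : X → ℝ≥0∞} (hP : IsDist P) {W : X → Y → ℝ≥0∞} (hW : IsChannel W) :
    renyiMI 1 (joint P W) = renyiD 1 (joint P W) (joint P fun _ => outputDist P W) := by
  rw [renyiMI_joint _ P hW]
  refine le_antisymm (iInf_le_of_le ⟨_, hP.outputDist hW⟩ le_rfl) (le_iInf fun Q => ?_)
  rw [← renyiD_one_outputDist_add hP hW Q.1]
  exact le_add_of_nonneg_right (renyiD_one_nonneg (hP.outputDist hW) Q.2)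

end MutualInformation

section Additivity

variable {X Y : Type*} [Fintype X] [Fintype Y]

lemma sibson_prodDist_prodCh {a : ℝ} (h0 : 0 < a) (n : ℕ) (P : X → ℝ≥0∞) (W : X → Y → ℝ≥0∞) :
    sibson a (prodDist n P) (prodCh n W) = prodDist n (sibson a P W) := by
  funext ys
  simp only [sibson, prodDist, prodCh, ← ENNReal.prod_rpow_of_nonneg h0.le,
    ENNReal.prod_rpow_of_nonneg (inv_nonneg.2 h0.le), ← Finset.prod_mul_distrib,
    Fintype.prod_sum fun i x => P x * W x (ys i) ^ a]

lemma prodDist_maxOutput_le {P : X → ℝ≥0∞} (hP : IsDist P) (n : ℕ) (W : X → Y → ℝ≥0∞) :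
    prodDist n (maxOutput P W) ≤ maxOutput (prodDist n P) (prodCh n W) := fun ys => by
  obtain ⟨x₀, hx₀⟩ := hP.exists_ne_zero
  have : Nonempty {x // P x ≠ 0} := ⟨⟨x₀, hx₀⟩⟩
  have attained (y : Y) : ∃ x : {x // P x ≠ 0}, W x y = maxOutput P W y := by
    rw [maxOutput, iSup_subtype']
    exact exists_eq_ciSup_of_finite
  choose best hbest using attained
  calc prodDist n (maxOutput P W) ys = prodCh n W (fun i => best (ys i)) ys :=
        Finset.prod_congr rfl fun i _ => (hbest (ys i)).symm
    _ ≤ maxOutput (prodDist n P) (prodCh n W) ys :=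
        le_iSup₂ (f := fun xs (_ : prodDist n P xs ≠ 0) => prodCh n W xs ys) _
          (Finset.prod_ne_zero_iff.2 fun i _ => (best (ys i)).2)

lemma renyiD_one_comp_equiv (e : Y ≃ X) (P Q : X → ℝ≥0∞) :
    renyiD 1 (P ∘ e) (Q ∘ e) = renyiD 1 P Q := by
  rw [renyiD_one, renyiD_one]
  exact e.sum_comp fun x => ((P x).toReal : EReal) * elog2 (P x / Q x)

lemma prodDist_succ_comp_consEquiv (n : ℕ) (P : X → ℝ≥0∞) :
    prodDist (n + 1) P ∘ Fin.consEquiv (fun _ => X) = joint P fun _ => prodDist n P := by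
  funext p
  simp [prodDist, joint, Fin.prod_univ_succ]

lemma renyiD_one_prodDist {P Q : X → ℝ≥0∞} (hP : IsDist P) (hQ : IsDist Q) (n : ℕ) :
    renyiD 1 (prodDist n P) (prodDist n Q) = n * renyiD 1 P Q := by
  induction n with
  | zero => simp [renyiD_one, prodDist]
  | succ n ih =>
    have hn : (0 : EReal) ≤ n := EReal.coe_nonneg.2 n.cast_nonneg
    rw [← renyiD_one_comp_equiv (Fin.consEquiv fun _ => X), prodDist_succ_comp_consEquiv,
      prodDist_succ_comp_consEquiv, renyiD_one_joint P hQ.ne_top (hP.prodDist n).isChannel_const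
        (hQ.prodDist n).isChannel_const, ih, ereal_sum_mul fun x _ => ENNReal.toReal_nonneg,
      hP.sum_toReal, EReal.coe_one, one_mul, Nat.cast_succ, add_comm,
      EReal.right_distrib_of_nonneg hn zero_le_one, one_mul]

lemma joint_prodDist_prodCh (n : ℕ) (P : X → ℝ≥0∞) (W : X → Y → ℝ≥0∞) :
    joint (prodDist n P) (prodCh n W) =
      prodDist n (joint P W) ∘
        (Equiv.arrowProdEquivProdArrow (Fin n) (fun _ => X) fun _ => Y).symm :=
  funext fun _ => Finset.prod_mul_distrib.symm

lemma outputDist_prodDist_prodCh (n : ℕ) (P : X → ℝ≥0∞) (W : X → Y → ℝ≥0∞) :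
    outputDist (prodDist n P) (prodCh n W) = prodDist n (outputDist P W) := by
  funext ys
  simp only [outputDist, prodDist, prodCh, ← Finset.prod_mul_distrib,
    Fintype.prod_sum fun i x => P x * W x (ys i)]

lemma natCast_mul_renyiMI_joint_le {α : ℝ≥0∞} (hα : α ≠ 0) {P : X → ℝ≥0∞} (hP : IsDist P)
    {W : X → Y → ℝ≥0∞} (hW : IsChannel W) (n : ℕ) :
    n * renyiMI α (joint P W) ≤ renyiMI α (joint (prodDist n P) (prodCh n W)) := by
  have hPn := hP.prodDist n
  have hWn := hW.prodCh n
  rcases order_cases hα with rfl | rfl | ⟨a, h0, h1, rfl⟩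
  · have const_out :
        (fun _ => prodDist n (outputDist P W)) = prodCh n fun _ : X => outputDist P W := rfl
    rw [renyiMI_one_joint hPn hWn, outputDist_prodDist_prodCh, const_out, joint_prodDist_prodCh,
      joint_prodDist_prodCh, renyiD_one_comp_equiv, renyiMI_one_joint hP hW,
      renyiD_one_prodDist (hP.joint hW) (hP.joint (hP.outputDist hW).isChannel_const)]
  · rw [renyiMI_top_joint hP hW, renyiMI_top_joint hPn hWn, ← elog2_pow, ← sum_prodDist]
    exact elog2_mono (Finset.sum_le_sum fun ys _ => prodDist_maxOutput_le hP n W ys)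
  · rw [renyiMI_ofReal_joint h0 h1 hP hW, renyiMI_ofReal_joint h0 h1 hPn hWn,
      sibson_prodDist_prodCh h0, sum_prodDist, elog2_rpow, elog2_rpow, elog2_pow, mul_left_comm]

end Additivity

section Simulation

variable {X Y : Type*} [Fintype X] [Fintype Y]

lemma IsSimulation.isChannel {c : ℝ} {N : X → Y → ℝ≥0∞} (hN : IsSimulation c N) : IsChannel N := by
  obtain ⟨m, M, PK, E, D, -, -, hPK, hE, hD, hN⟩ := hN
  intro x
  calc ∑ y, N x y = ∑ k, ∑ j, ∑ y, PK k * E x k j * D j k y := by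
        simp only [hN]
        rw [Finset.sum_comm]
        exact Finset.sum_congr rfl fun k _ => Finset.sum_comm
    _ = 1 := by simp only [← Finset.mul_sum, hD, hE, mul_one, hPK]

lemma natCast_le_two_rpow {M : ℕ} (hM : 0 < M) {c : ℝ} (hc : Real.logb 2 M ≤ c) :
    (M : ℝ≥0∞) ≤ 2 ^ c := by
  rw [← ENNReal.ofReal_natCast, ← ENNReal.ofReal_ofNat, ENNReal.ofReal_rpow_of_pos two_pos]
  exact ENNReal.ofReal_le_ofReal
    ((Real.logb_le_iff_le_rpow one_lt_two (Nat.cast_pos.2 hM)).1 hc)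

lemma IsSimulation.exists_isDist_le_two_rpow_mul {c : ℝ} {N : X → Y → ℝ≥0∞}
    (hN : IsSimulation c N) : ∃ Q : Y → ℝ≥0∞, IsDist Q ∧ ∀ x y, N x y ≤ 2 ^ c * Q y := by
  obtain ⟨m, M, PK, E, D, hM, hMc, hPK, hE, hD, hN⟩ := hN
  have hM0 : (M : ℝ≥0∞) ≠ 0 := Nat.cast_ne_zero.2 hM.ne'
  have hMtop : (M : ℝ≥0∞) ≠ ⊤ := ENNReal.natCast_ne_top M
  -- the decoder output when the message is drawn uniformly, independently of the input
  refine ⟨fun y => (M : ℝ≥0∞)⁻¹ * ∑ k, ∑ j, PK k * D j k y, ?_, fun x y => ?_⟩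
  · have mass (k : Fin m) : ∑ y, ∑ j, PK k * D j k y = PK k * M := by
      rw [Finset.sum_comm]
      simp [← Finset.mul_sum, hD, mul_comm]
    rw [IsDist, ← Finset.mul_sum, Finset.sum_comm]
    simp only [mass, ← Finset.sum_mul, hPK, one_mul, ENNReal.inv_mul_cancel hM0 hMtop]
  · have encoder_le_one (k : Fin m) (j : Fin M) : E x k j ≤ 1 :=
      hE x k ▸ Finset.single_le_sum_of_canonicallyOrdered (f := E x k) (Finset.mem_univ j)
    calc N x y = ∑ k, ∑ j, PK k * E x k j * D j k y := hN x y
      _ ≤ ∑ k, ∑ j, PK k * D j k y := by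
        gcongr with k _ j _
        exact mul_le_of_le_one_right' (encoder_le_one k j)
      _ = M * ((M : ℝ≥0∞)⁻¹ * ∑ k, ∑ j, PK k * D j k y) :=
        (ENNReal.mul_inv_cancel_left hM0 hMtop).symm
      _ ≤ 2 ^ c * ((M : ℝ≥0∞)⁻¹ * ∑ k, ∑ j, PK k * D j k y) := by
        gcongr
        exact natCast_le_two_rpow hM hMc

lemma renyiMI_joint_le_simD_add {α : ℝ≥0∞} (hα : α ≠ 0) {P : X → ℝ≥0∞} (hP : IsDist P)
    {W : X → Y → ℝ≥0∞} (hW : IsChannel W) (c : ℝ) :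
    renyiMI α (joint P W) ≤ simD α W c + c := by
  refine (EReal.sub_le_iff_le_add (.inl (EReal.coe_ne_bot c)) (.inl (EReal.coe_ne_top c))).1
    (le_iInf fun N => EReal.sub_le_of_le_add ?_)
  obtain ⟨Q, hQ, hNQ⟩ := N.2.exists_isDist_le_two_rpow_mul
  have joint_le (p : X × Y) : joint P N.1 p ≤ 2 ^ c * joint P (fun _ => Q) p := by
    rw [joint, joint, mul_left_comm]
    gcongr
    exact hNQ p.1 p.2
  calc renyiMI α (joint P W) ≤ renyiD α (joint P W) (joint P fun _ => Q) :=
        renyiMI_joint α P hW ▸ iInf_le_of_le ⟨Q, hQ⟩ le_rfl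
    _ ≤ renyiD α (joint P W) (joint P N.1) + c :=
        renyiD_le_add_of_le_two_rpow_mul hα (hP.joint hW)
          (hP.joint hQ.isChannel_const).ne_top joint_le
    _ ≤ chD α W N.1 + c := by
        gcongr
        exact renyiD_joint_le_chD hα hP hW N.2.isChannel

lemma simD_nonneg [Nonempty X] {α : ℝ≥0∞} (hα : α ≠ 0) {W : X → Y → ℝ≥0∞} (hW : IsChannel W)
    (c : ℝ) : 0 ≤ simD α W c :=
  le_iInf fun N => (renyiD_nonneg hα (hW.isDist _) (N.2.isChannel.isDist _)).trans
    (le_iSup (fun x => renyiD α (W x) (N.1 x)) (Classical.arbitrary X))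

end Simulation

section OrderComparison

variable {X Y : Type*} [Fintype X] [Fintype Y]

lemma hellinger_le_rpow_hellinger {a b : ℝ} (h0 : 0 < a) (hab : a ≤ b) (hb : b < 1)
    (P : X → ℝ≥0∞) {Q : X → ℝ≥0∞} (hQ : IsDist Q) :
    hellinger a P Q ≤ hellinger b P Q ^ (a / b) := by
  rcases hab.eq_or_lt with rfl | hlt
  · rw [div_self h0.ne', ENNReal.rpow_one]
  have hb0 : 0 < b := h0.trans hlt
  have hratio : 0 < a / b ∧ a / b < 1 := ⟨div_pos h0 hb0, (div_lt_one hb0).2 hlt⟩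
  have split (x : X) : P x ^ a * Q x ^ (1 - a) =
      (P x ^ b * Q x ^ (1 - b)) ^ (a / b) * Q x ^ (1 - a / b) := by
    rw [ENNReal.mul_rpow_of_nonneg _ _ hratio.1.le, ← ENNReal.rpow_mul, ← ENNReal.rpow_mul,
      mul_assoc, ← ENNReal.rpow_add_of_nonneg _ _
        (mul_nonneg (sub_nonneg.2 hb.le) hratio.1.le) (sub_nonneg.2 hratio.2.le),
      mul_div_cancel₀ a hb0.ne']
    congr 2
    field_simp
    ring
  calc hellinger a P Q = hellinger (a / b) (fun x => P x ^ b * Q x ^ (1 - b)) Q :=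
        Finset.sum_congr rfl fun x _ => split x
    _ ≤ hellinger b P Q ^ (a / b) * (∑ x, Q x) ^ (1 - a / b) :=
        hellinger_le_of_lt_one hratio.1 hratio.2 _ Q
    _ = hellinger b P Q ^ (a / b) := by
        rw [hQ, ENNReal.one_rpow, mul_one]

lemma order_factor_nonneg {a b : ℝ} (h0 : 0 < a) (ha : a < 1) (hab : a ≤ b) (hb : b ≤ 1) :
    0 ≤ a * (1 - b) / (b * (1 - a)) :=
  div_nonneg (mul_nonneg h0.le (sub_nonneg.2 hb))
    (mul_nonneg (h0.trans_le hab).le (sub_nonneg.2 ha.le))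

lemma mul_renyiD_le_renyiD {a b : ℝ} (h0 : 0 < a) (ha : a < 1) (hab : a ≤ b) (hb : b ≤ 1)
    {P Q : X → ℝ≥0∞} (hP : IsDist P) (hQ : IsDist Q) :
    ((a * (1 - b) / (b * (1 - a)) : ℝ) : EReal) * renyiD (ENNReal.ofReal b) P Q ≤
      renyiD (ENNReal.ofReal a) P Q := by
  rcases hb.eq_or_lt with rfl | hb
  · rw [sub_self, mul_zero, zero_div, EReal.coe_zero, zero_mul]
    exact renyiD_nonneg (ENNReal.ofReal_pos.2 h0).ne' hP hQ
  have hb0 : 0 < b := h0.trans_le hab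
  have exponent : (b - 1)⁻¹ * (a * (1 - b) / (b * (1 - a))) = a / b * (a - 1)⁻¹ := by
    have ha' : a - 1 ≠ 0 := (sub_neg.2 ha).ne
    have hb' : b - 1 ≠ 0 := (sub_neg.2 hb).ne
    rw [← neg_sub a 1, ← neg_sub b 1]
    field_simp
  rw [renyiD_ofReal h0 ha.ne, renyiD_ofReal hb0 hb.ne, ← elog2_rpow, ← ENNReal.rpow_mul, exponent,
    ENNReal.rpow_mul]
  exact elog2_mono (rpow_le_rpow_of_nonpos (inv_nonpos.2 (sub_nonpos.2 ha.le))
    (hellinger_le_rpow_hellinger h0 hab hb P hQ))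

lemma mul_simD_le_simD [Nonempty X] {a b : ℝ} (h0 : 0 < a) (ha : a < 1) (hab : a ≤ b) (hb : b ≤ 1)
    {W : X → Y → ℝ≥0∞} (hW : IsChannel W) (c : ℝ) :
    ((a * (1 - b) / (b * (1 - a)) : ℝ) : EReal) * simD (ENNReal.ofReal b) W c ≤
      simD (ENNReal.ofReal a) W c := by
  have hk := EReal.coe_nonneg.2 (order_factor_nonneg h0 ha hab hb)
  set k : EReal := ((a * (1 - b) / (b * (1 - a)) : ℝ) : EReal)
  refine le_iInf fun N => ?_
  obtain ⟨x, hx⟩ :=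
    exists_eq_ciSup_of_finite (f := fun x => renyiD (ENNReal.ofReal b) (W x) (N.1 x))
  calc k * simD (ENNReal.ofReal b) W c ≤ k * chD (ENNReal.ofReal b) W N.1 :=
        mul_le_mul_of_nonneg_left (iInf_le _ N) hk
    _ = k * renyiD (ENNReal.ofReal b) (W x) (N.1 x) := by rw [chD, ← hx]
    _ ≤ renyiD (ENNReal.ofReal a) (W x) (N.1 x) :=
        mul_renyiD_le_renyiD h0 ha hab hb (hW.isDist x) (N.2.isChannel.isDist x)
    _ ≤ chD (ENNReal.ofReal a) W N.1 :=
        le_iSup (fun x => renyiD (ENNReal.ofReal a) (W x) (N.1 x)) x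

end OrderComparison

section StrongConverseExponent

variable {X Y : Type*} [Fintype X] [Fintype Y]

lemma Esc_nonneg [Nonempty X] {α : ℝ≥0∞} (hα : α ≠ 0) {W : X → Y → ℝ≥0∞} (hW : IsChannel W)
    (r : ℝ) : 0 ≤ Esc α W r :=
  le_iInf fun c => Filter.le_limsup_of_frequently_le' <| Frequently.of_forall fun n =>
    EReal.mul_nonneg (EReal.coe_nonneg.2 (by positivity)) (simD_nonneg hα (hW.prodCh n) _)

lemma mul_Esc_le_Esc [Nonempty X] {a b : ℝ} (h0 : 0 < a) (ha : a < 1) (hab : a ≤ b) (hb : b ≤ 1)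
    {W : X → Y → ℝ≥0∞} (hW : IsChannel W) (r : ℝ) :
    ((a * (1 - b) / (b * (1 - a)) : ℝ) : EReal) * Esc (ENNReal.ofReal b) W r ≤
      Esc (ENNReal.ofReal a) W r := by
  have hk := EReal.coe_nonneg.2 (order_factor_nonneg h0 ha hab hb)
  refine le_iInf fun c => (mul_le_mul_of_nonneg_left (iInf_le _ c) hk).trans ?_
  rw [← EReal.limsup_const_mul_of_nonneg_of_ne_top hk (EReal.coe_ne_top _)]
  refine limsup_le_limsup (.of_forall fun n => ?_)
  refine (mul_left_comm _ _ _).trans_le ?_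
  exact mul_le_mul_of_nonneg_left (mul_simD_le_simD h0 ha hab hb (hW.prodCh n) (c.1 n))
    (EReal.coe_nonneg.2 (by positivity))

lemma renyiMI_joint_le_div_mul_simD_prodCh_add {α : ℝ≥0∞} (hα : α ≠ 0) {P : X → ℝ≥0∞}
    (hP : IsDist P) {W : X → Y → ℝ≥0∞} (hW : IsChannel W) {n : ℕ} (hn : n ≠ 0) (c : ℝ) :
    renyiMI α (joint P W) ≤ ((1 / n : ℝ) : EReal) * simD α (prodCh n W) c + (c / n : ℝ) := by
  have hn' : (n : ℝ) ≠ 0 := Nat.cast_ne_zero.2 hn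
  have hinv : (0 : EReal) ≤ ((1 / n : ℝ) : EReal) := EReal.coe_nonneg.2 (by positivity)
  calc renyiMI α (joint P W) = ((1 / n : ℝ) : EReal) * (n * renyiMI α (joint P W)) := by
        rw [← mul_assoc, ← EReal.coe_coe_eq_natCast, ← EReal.coe_mul, one_div_mul_cancel hn',
          EReal.coe_one, one_mul]
    _ ≤ ((1 / n : ℝ) : EReal) * (simD α (prodCh n W) c + c) :=
        mul_le_mul_of_nonneg_left ((natCast_mul_renyiMI_joint_le hα hP hW n).trans
          (renyiMI_joint_le_simD_add hα (hP.prodDist n) (hW.prodCh n) c)) hinv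
    _ = ((1 / n : ℝ) : EReal) * simD α (prodCh n W) c + (c / n : ℝ) := by
        rw [EReal.left_distrib_of_nonneg_of_ne_top hinv (EReal.coe_ne_top _), ← EReal.coe_mul,
          one_div_mul_eq_div]

lemma renyiCap_sub_le_Esc {α : ℝ≥0∞} (hα : α ≠ 0) {W : X → Y → ℝ≥0∞} (hW : IsChannel W) (r : ℝ) :
    renyiCap α W - r ≤ Esc α W r := by
  refine le_iInf fun c => EReal.sub_le_of_le_add (iSup_le fun P => ?_)
  obtain ⟨c, hc0, hcr⟩ := c
  set rate : ℕ → EReal := fun n => ((c n / n : ℝ) : EReal)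
  have rate_ne_top : limsup rate atTop ≠ ⊤ := ne_top_of_le_ne_top (EReal.coe_ne_top r) hcr
  have rate_ne_bot : limsup rate atTop ≠ ⊥ := ne_bot_of_le_ne_bot EReal.zero_ne_bot <|
    le_limsup_of_frequently_le' <| Frequently.of_forall fun n =>
      EReal.coe_nonneg.2 (div_nonneg (hc0 n) n.cast_nonneg)
  set exponent : ℕ → EReal := fun n => ((1 / n : ℝ) : EReal) * simD α (prodCh n W) (c n)
  calc renyiMI α (joint P.1 W) ≤ limsup (exponent + rate) atTop :=
        le_limsup_of_frequently_le' <| ((eventually_ne_atTop 0).mono fun n hn =>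
          renyiMI_joint_le_div_mul_simD_prodCh_add hα P.2 hW hn (c n)).frequently
    _ ≤ limsup exponent atTop + limsup rate atTop :=
        EReal.limsup_add_le (.inr rate_ne_top) (.inr rate_ne_bot)
    _ ≤ limsup exponent atTop + r := by gcongr

end StrongConverseExponent

/-- **Converse bound for the strong converse exponent** (Theorem 17).
For any channel `W` and `r ≥ 0`:
`E_sc^{(α)}(W,r) ≥ max_{α ≤ β ≤ 1} (α(1-β))/(β(1-α)) (I_β(W) - r)` for `α ∈ (0,1)`,
and `E_sc^{(α)}(W,r) ≥ |I_α(W) - r|⁺` for `α ∈ [1,∞]`. -/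
theorem strong_converse_exponent_converse
    {X Y : Type*} [Fintype X] [Fintype Y] [Nonempty X] [Nonempty Y]
    (W : X → Y → ℝ≥0∞) (hW : IsChannel W) (r : ℝ) (hr : 0 ≤ r) :
    (∀ α : ℝ, 0 < α → α < 1 →
      (⨆ β : {β : ℝ // α ≤ β ∧ β ≤ 1},
          (((α * (1 - β.1)) / (β.1 * (1 - α)) : ℝ) : EReal) *
            (renyiCap (ENNReal.ofReal β.1) W - (r : EReal))) ≤
        Esc (ENNReal.ofReal α) W r) ∧
    (∀ α : ℝ≥0∞, 1 ≤ α →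
      max (renyiCap α W - (r : EReal)) 0 ≤ Esc α W r) := by
  refine ⟨fun α h0 h1 => iSup_le fun ⟨β, hαβ, hβ⟩ => ?_, fun α hα => ?_⟩
  · have hβ0 : ENNReal.ofReal β ≠ 0 := (ENNReal.ofReal_pos.2 (h0.trans_le hαβ)).ne'
    calc ((α * (1 - β) / (β * (1 - α)) : ℝ) : EReal) * (renyiCap (ENNReal.ofReal β) W - r)
        ≤ ((α * (1 - β) / (β * (1 - α)) : ℝ) : EReal) * Esc (ENNReal.ofReal β) W r :=
          mul_le_mul_of_nonneg_left (renyiCap_sub_le_Esc hβ0 hW r)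
            (EReal.coe_nonneg.2 (order_factor_nonneg h0 h1 hαβ hβ))
      _ ≤ Esc (ENNReal.ofReal α) W r := mul_Esc_le_Esc h0 h1 hαβ hβ hW r
  · have hα0 : α ≠ 0 := (zero_lt_one.trans_le hα).ne'
    exact max_le (renyiCap_sub_le_Esc hα0 hW r) (Esc_nonneg hα0 hW r)

end RST
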